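/- Let N ≥ 2 be an integer and s ∈ (1/2, 1). For every ρ ∈ (0, 1) there exists K_ρ > 0 such that for every radial u ∈ C_c^∞(B) with support contained in the closed ball of radius ρ centered at the origin: Q_{N,s,B}(u) ≥ S_{N,s}(ℝ^N)·‖u‖²_{L^{2*_s}(B)} − K_ρ·‖u‖²_{L²(B)}; moreover one can take K_ρ = a_{N,s}·(1−ρ)^{−2s} for a constant a_{N,s} depending only on N and s. -/

import Mathlib

open MeasureTheory Real Filter Topology Set

noncomputable section

/-- Euclidean space ℝ^N. -/
abbrev Euc (N : ℕ) := EuclideanSpace ℝ (Fin N)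

/-- The normalization constant c_{N,s}. -/
def cNs (N : ℕ) (s : ℝ) : ℝ :=
  s * (4 : ℝ) ^ s * Real.Gamma (((N : ℝ) + 2 * s) / 2) /
    (Real.pi ^ ((N : ℝ) / 2) * Real.Gamma (1 - s))

/-- The Gagliardo quadratic form Q_{N,s,U}. -/
def gagliardo (N : ℕ) (s : ℝ) (U : Set (Euc N)) (u : Euc N → ℝ) : ℝ :=
  (cNs N s / 2) * ∫ x in U, ∫ y in U, (u x - u y) ^ 2 / ‖x - y‖ ^ ((N : ℝ) + 2 * s)

/-- The L^p norm of u on a set U. -/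
def lpNormOn (N : ℕ) (p : ℝ) (U : Set (Euc N)) (u : Euc N → ℝ) : ℝ :=
  (∫ x in U, |u x| ^ p) ^ (1 / p)

/-- The fractional critical Sobolev exponent 2*_s = 2N/(N-2s). -/
def critExp (N : ℕ) (s : ℝ) : ℝ := 2 * (N : ℝ) / ((N : ℝ) - 2 * s)

/-- Smooth compactly supported test function in U. -/
def testFun (N : ℕ) (U : Set (Euc N)) (u : Euc N → ℝ) : Prop :=
  ContDiff ℝ (⊤ : ℕ∞) u ∧ HasCompactSupport u ∧ tsupport u ⊆ U

/-- The critical fractional Sobolev constant S_{N,s}(U). -/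
def sobolevConst (N : ℕ) (s : ℝ) (U : Set (Euc N)) : ℝ :=
  sInf { r | ∃ u, testFun N U u ∧ ¬ (∀ x, u x = 0) ∧
    r = gagliardo N s U u / (lpNormOn N (critExp N s) U u) ^ 2 }

/-- The open cylinder B'_r × (-r, r) in ℝ^{N-1} × ℝ. -/
def cylinder (N : ℕ) (r : ℝ) : Set (EuclideanSpace ℝ (Fin (N - 1)) × ℝ) :=
  (Metric.ball 0 r) ×ˢ (Set.Ioo (-r) r)

/-- A bounded open set is Lipschitz: near each boundary point the boundary is the
bi-Lipschitz image of a flat piece. -/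
def IsLipschitzSet (N : ℕ) (Ω : Set (Euc N)) : Prop :=
  ∀ q ∈ frontier Ω, ∃ (r C : ℝ) (Φ : EuclideanSpace ℝ (Fin (N - 1)) × ℝ → Euc N),
    0 < r ∧ 1 < C ∧
    (∀ x ∈ cylinder N r, ∀ y ∈ cylinder N r,
      C⁻¹ * dist x y ≤ dist (Φ x) (Φ y) ∧ dist (Φ x) (Φ y) ≤ C * dist x y) ∧
    IsOpen (Φ '' cylinder N r) ∧ q ∈ Φ '' cylinder N r ∧
    Φ '' ((Metric.ball 0 r) ×ˢ (Set.Ioo 0 r)) ⊆ Ω ∧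
    Φ '' ((Metric.ball 0 r) ×ˢ ({0} : Set ℝ)) ⊆ frontier Ω

/-- Membership in H^s_0(U): approximation by smooth compactly supported functions
in L²(U) and in the Gagliardo form. -/
def memHs0 (N : ℕ) (s : ℝ) (U : Set (Euc N)) (u : Euc N → ℝ) : Prop :=
  ∃ v : ℕ → Euc N → ℝ, (∀ k, testFun N U (v k)) ∧
    Tendsto (fun k => ∫ x in U, (v k x - u x) ^ 2) atTop (nhds 0) ∧
    Tendsto (fun k => gagliardo N s U (fun x => v k x - u x)) atTop (nhds 0)

/-- A radial function on ℝ^N. -/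
def IsRadial (N : ℕ) (u : Euc N → ℝ) : Prop :=
  ∀ x y : Euc N, ‖x‖ = ‖y‖ → u x = u y

/-- The open unit ball of ℝ^N. -/
def unitBall (N : ℕ) : Set (Euc N) := Metric.ball 0 1

/-- The radial critical Sobolev constant S_{N,s,rad}(B,h) on the unit ball. -/
def sobolevConstRad (N : ℕ) (s : ℝ) (h : Euc N → ℝ) : ℝ :=
  sInf { r | ∃ u, testFun N (unitBall N) u ∧ IsRadial N u ∧ ¬ (∀ x, u x = 0) ∧
    r = (gagliardo N s (unitBall N) u + ∫ x in unitBall N, h x * (u x) ^ 2) /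
        (lpNormOn N (critExp N s) (unitBall N) u) ^ 2 }

/-- Membership in H^s_{0,rad}(B): radial, approximated by radial test functions. -/
def memHs0rad (N : ℕ) (s : ℝ) (u : Euc N → ℝ) : Prop :=
  IsRadial N u ∧ ∃ v : ℕ → Euc N → ℝ,
    (∀ k, testFun N (unitBall N) (v k) ∧ IsRadial N (v k)) ∧
    Tendsto (fun k => ∫ x in unitBall N, (v k x - u x) ^ 2) atTop (nhds 0) ∧
    Tendsto (fun k => gagliardo N s (unitBall N) (fun x => v k x - u x)) atTop (nhds 0)

/-- The fractional Laplacian of a test function. -/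
def fracLap (N : ℕ) (s : ℝ) (φ : Euc N → ℝ) (x : Euc N) : ℝ :=
  (cNs N s / 2) * ∫ z : Euc N, (2 * φ x - φ (x + z) - φ (x - z)) / ‖z‖ ^ ((N : ℝ) + 2 * s)

/-!
For `u` vanishing off `U`, the energy on the whole space exceeds the energy on `U` only by the
interaction of `u` with the complement of `U`. If the complement stays at distance at least `δ`
from the support of `u`, this interaction is at most
`c_{N,s} ∫ u² · ∫_{‖z‖ ≥ δ} ‖z‖^{-N-2s} dz`, and the tail integral scales like `δ^{-2s}`. The
Sobolev inequality on the whole space gives the result; for the unit ball and a support in the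
closed ball of radius `ρ`, `δ = 1 - ρ`.
-/

section PairIntegrals

variable {G : Type*} [AddGroup G] [MeasurableSpace G] [MeasurableAdd₂ G] [MeasurableNeg G]
  {μ ν : Measure G} [SFinite μ] [SFinite ν] [μ.IsAddRightInvariant] {f g : G → ℝ}

lemma integrable_mul_comp_sub (hf : Integrable f ν) (hg : Integrable g μ) :
    Integrable (fun z : G × G ↦ f z.2 * g (z.1 - z.2)) (μ.prod ν) :=
  hf.convolution_integrand (ContinuousLinearMap.mul ℝ ℝ) hg

lemma integral_mul_comp_sub (hf : Integrable f ν) (hg : Integrable g μ) :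
    ∫ z : G × G, f z.2 * g (z.1 - z.2) ∂μ.prod ν = (∫ x, f x ∂ν) * ∫ x, g x ∂μ :=
  (integral_prod _ (integrable_mul_comp_sub hf hg)).trans
    (integral_convolution (ContinuousLinearMap.mul ℝ ℝ) hf hg)

end PairIntegrals

section TailKernel

open Module (finrank)

lemma eqOn_pow_pred_smul_indicator_rpow {d : ℕ} (hd : 0 < d) (p δ : ℝ) :
    EqOn (fun r : ℝ ↦ r ^ (d - 1) • (Ici δ).indicator (fun r ↦ r ^ (-p)) r)
      ((Ici δ).indicator fun r ↦ r ^ ((d : ℝ) - 1 - p)) (Ioi 0) := by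
  intro r (hr : 0 < r)
  have hpow : r ^ (d - 1) * r ^ (-p) = r ^ ((d : ℝ) - 1 - p) := by
    rw [← rpow_natCast, ← rpow_add hr, Nat.cast_pred hd, ← sub_eq_add_neg]
  by_cases h : r ∈ Ici δ <;> simp [h, hpow]

variable {E : Type*} [NormedAddCommGroup E]

/-- The Riesz-type kernel `‖z‖⁻ᵖ` cut off inside the ball of radius `δ`. It dominates the
interaction of a function with the points at distance at least `δ` from its support. -/
def tailKernel (p δ : ℝ) (z : E) : ℝ := (Ici δ).indicator (fun r ↦ r ^ (-p)) ‖z‖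

lemma tailKernel_of_le {δ : ℝ} {z : E} (p : ℝ) (hz : δ ≤ ‖z‖) :
    tailKernel p δ z = ‖z‖ ^ (-p) :=
  indicator_of_mem hz _

lemma tailKernel_nonneg {δ : ℝ} (p : ℝ) (hδ : 0 ≤ δ) (z : E) : 0 ≤ tailKernel p δ z :=
  indicator_nonneg (fun _ hr ↦ rpow_nonneg (hδ.trans hr) _) _

variable [NormedSpace ℝ E] [FiniteDimensional ℝ E] [Nontrivial E] [MeasurableSpace E]
  [BorelSpace E] (μ : Measure E) [μ.IsAddHaarMeasure] {p δ : ℝ}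

lemma integrable_tailKernel (hp : finrank ℝ E < p) (hδ : 0 < δ) :
    Integrable (tailKernel p δ) μ := by
  refine (integrable_fun_norm_addHaar μ).2 ?_
  rw [integrableOn_congr_fun (eqOn_pow_pred_smul_indicator_rpow Module.finrank_pos p δ)
    measurableSet_Ioi]
  refine ((integrable_indicator_iff measurableSet_Ici).2 ?_).integrableOn
  rw [integrableOn_Ici_iff_integrableOn_Ioi]
  exact integrableOn_Ioi_rpow_of_lt (by linarith) hδ

lemma integral_tailKernel (hp : finrank ℝ E < p) (hδ : 0 < δ) :
    ∫ z, tailKernel p δ z ∂μ = finrank ℝ E * μ.real (Metric.ball 0 1) / (p - finrank ℝ E) *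
      δ ^ (finrank ℝ E - p) := by
  have hradial :
      ∫ r in Ioi (0 : ℝ), r ^ (finrank ℝ E - 1) • (Ici δ).indicator (fun r ↦ r ^ (-p)) r =
        δ ^ (finrank ℝ E - p) / (p - finrank ℝ E) := by
    rw [setIntegral_congr_fun measurableSet_Ioi
        (eqOn_pow_pred_smul_indicator_rpow Module.finrank_pos p δ),
      setIntegral_indicator measurableSet_Ici, inter_eq_self_of_subset_right (Ici_subset_Ioi.2 hδ),
      integral_Ici_eq_integral_Ioi, integral_Ioi_rpow_of_lt (by linarith) hδ, neg_div,
      ← div_neg]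
    ring_nf
  unfold tailKernel
  rw [integral_fun_norm_addHaar, hradial, nsmul_eq_mul, smul_eq_mul]
  ring

lemma integrable_min_one_sq_norm_mul_rpow (hp : finrank ℝ E < p) (hp' : p < finrank ℝ E + 2) :
    Integrable (fun z : E ↦ min 1 (‖z‖ ^ 2) * ‖z‖ ^ (-p)) μ := by
  have hmeas : Measurable fun z : E ↦ min 1 (‖z‖ ^ 2) * ‖z‖ ^ (-p) := by fun_prop
  rw [← integrableOn_univ, ← union_compl_self (Metric.ball (0 : E) 1)]
  refine IntegrableOn.union ?_ ?_
  · refine integrableOn_ball_of_norm_le_rpow (C := 1) (α := p - 2) Module.finrank_pos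
      (by linarith) (Eventually.of_forall fun z ↦ ?_) hmeas.aestronglyMeasurable
    rw [norm_of_nonneg (by positivity), one_mul]
    rcases eq_or_ne z 0 with rfl | hz
    · simpa using rpow_nonneg le_rfl _
    calc min 1 (‖z‖ ^ 2) * ‖z‖ ^ (-p) ≤ ‖z‖ ^ 2 * ‖z‖ ^ (-p) := by gcongr; exact min_le_right _ _
      _ = ‖z‖ ^ (-(p - 2)) := by
        rw [← rpow_natCast, ← rpow_add (norm_pos_iff.2 hz)]
        congr 1
        push_cast
        ring
  · refine (integrable_tailKernel μ hp one_pos).integrableOn.mono' hmeas.aestronglyMeasurable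
      (ae_restrict_of_forall_mem Metric.isOpen_ball.measurableSet.compl fun z hz ↦ ?_)
    rw [norm_of_nonneg (by positivity), tailKernel_of_le p (by simpa using hz)]
    exact mul_le_of_le_one_left (by positivity) (min_le_left _ _)

end TailKernel

section GagliardoKernel

open Module (finrank)

variable {E : Type*} [NormedAddCommGroup E] {p δ : ℝ} {u : E → ℝ} {U : Set E}

/-- The integrand of the Gagliardo form of `u` with singularity exponent `p`, as a function on
pairs of points; the fractional Sobolev energy of order `s` in dimension `N` has `p = N + 2s`. -/
def gagliardoKernel (p : ℝ) (u : E → ℝ) (z : E × E) : ℝ :=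
  (u z.1 - u z.2) ^ 2 / ‖z.1 - z.2‖ ^ p

lemma gagliardoKernel_nonneg (p : ℝ) (u : E → ℝ) (z : E × E) : 0 ≤ gagliardoKernel p u z := by
  unfold gagliardoKernel
  positivity

lemma gagliardoKernel_swap (p : ℝ) (u : E → ℝ) (z : E × E) :
    gagliardoKernel p u z.swap = gagliardoKernel p u z := by
  simp only [gagliardoKernel, Prod.fst_swap, Prod.snd_swap, norm_sub_rev z.2, sub_sq_comm (u z.2)]

lemma gagliardoKernel_le_sq_mul_tailKernel (hδ : 0 < δ)
    (hsep : Metric.thickening δ (Function.support u) ⊆ U) {z : E × E} (hz : z.1 ∉ U) :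
    gagliardoKernel p u z ≤ u z.2 ^ 2 * tailKernel p δ (z.1 - z.2) := by
  have hux : u z.1 = 0 := Function.notMem_support.1 fun h ↦
    hz (hsep (Metric.self_subset_thickening hδ _ h))
  rw [gagliardoKernel, hux, zero_sub, neg_sq]
  rcases eq_or_ne (u z.2) 0 with huy | huy
  · simp [huy]
  have hfar : δ ≤ ‖z.1 - z.2‖ := by
    by_contra! hlt
    exact hz (hsep (Metric.mem_thickening_iff.2 ⟨z.2, huy, by rwa [dist_eq_norm]⟩))
  rw [tailKernel_of_le p hfar, rpow_neg (norm_nonneg _), div_eq_mul_inv]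

lemma gagliardoKernel_le_indicator_add_tail (hδ : 0 < δ)
    (hsep : Metric.thickening δ (Function.support u) ⊆ U) (z : E × E) :
    gagliardoKernel p u z ≤ (U ×ˢ U).indicator (gagliardoKernel p u) z +
      (u z.2 ^ 2 * tailKernel p δ (z.1 - z.2) +
        u z.swap.2 ^ 2 * tailKernel p δ (z.swap.1 - z.swap.2)) := by
  have htail (z : E × E) : 0 ≤ u z.2 ^ 2 * tailKernel p δ (z.1 - z.2) :=
    mul_nonneg (sq_nonneg _) (tailKernel_nonneg p hδ.le _)
  by_cases hz : z ∈ U ×ˢ U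
  · rw [indicator_of_mem hz]
    linarith [htail z, htail z.swap]
  rw [indicator_of_notMem hz, zero_add]
  by_cases hz₁ : z.1 ∈ U
  · have hz₂ : z.swap.1 ∉ U := fun h ↦ hz ⟨hz₁, h⟩
    have hle := gagliardoKernel_le_sq_mul_tailKernel (p := p) hδ hsep hz₂
    rw [gagliardoKernel_swap] at hle
    linarith [htail z]
  · linarith [htail z.swap, gagliardoKernel_le_sq_mul_tailKernel (p := p) hδ hsep hz₁]

lemma sq_sub_le_mul_min_one_sq_norm {L : NNReal} {M : ℝ} (hL : LipschitzWith L u)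
    (hM : ∀ x, ‖u x‖ ≤ M) (x y : E) :
    (u x - u y) ^ 2 ≤ max ((L : ℝ) ^ 2) ((2 * M) ^ 2) * min 1 (‖x - y‖ ^ 2) := by
  have hbdd : |u x - u y| ≤ 2 * M := by
    rw [two_mul]
    exact norm_sub_le_of_le (hM x) (hM y)
  have hlip : |u x - u y| ≤ L * ‖x - y‖ := by simpa using hL.norm_sub_le x y
  rw [← sq_abs, mul_min_of_nonneg _ _ (by positivity), mul_one]
  refine le_min ?_ ?_
  · exact (pow_le_pow_left₀ (abs_nonneg _) hbdd 2).trans (le_max_right _ _)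
  · calc |u x - u y| ^ 2 ≤ (L * ‖x - y‖) ^ 2 := pow_le_pow_left₀ (abs_nonneg _) hlip 2
      _ = L ^ 2 * ‖x - y‖ ^ 2 := mul_pow _ _ _
      _ ≤ _ := by gcongr; exact le_max_left _ _

variable [NormedSpace ℝ E] [FiniteDimensional ℝ E] [Nontrivial E] [MeasurableSpace E]
  [BorelSpace E] {μ : Measure E} [μ.IsAddHaarMeasure]

lemma integrable_gagliardoKernel {L : NNReal} (hL : LipschitzWith L u)
    (hu : HasCompactSupport u) (hp : finrank ℝ E < p) (hp' : p < finrank ℝ E + 2) :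
    Integrable (gagliardoKernel p u) (μ.prod μ) := by
  obtain ⟨M, hM⟩ := hu.exists_bound_of_continuous hL.continuous
  set C : ℝ := max ((L : ℝ) ^ 2) ((2 * M) ^ 2)
  set F : E × E → ℝ := fun z ↦ (tsupport u).indicator (fun _ ↦ C) z.2 *
    (min 1 (‖z.1 - z.2‖ ^ 2) * ‖z.1 - z.2‖ ^ (-p)) with hF
  have hC : 0 ≤ C := le_max_of_le_left (sq_nonneg _)
  have hF_nonneg (z : E × E) : 0 ≤ F z :=
    mul_nonneg (indicator_nonneg (fun _ _ ↦ hC) _) (by positivity)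
  have hF_int : Integrable F (μ.prod μ) := integrable_mul_comp_sub
    ((integrable_indicator_iff (isClosed_tsupport u).measurableSet).2
      (integrableOn_const hu.isCompact.measure_lt_top.ne))
    (integrable_min_one_sq_norm_mul_rpow μ hp hp')
  have hle_F {z : E × E} (hz : z.2 ∈ tsupport u) : gagliardoKernel p u z ≤ F z := by
    simp only [hF, indicator_of_mem hz, gagliardoKernel, rpow_neg (norm_nonneg _),
      div_eq_mul_inv, ← mul_assoc]
    gcongr
    exact sq_sub_le_mul_min_one_sq_norm hL hM z.1 z.2
  have hmeas : Measurable (gagliardoKernel p u) := by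
    have := hL.continuous.measurable
    unfold gagliardoKernel
    fun_prop
  refine (hF_int.add hF_int.swap).mono' hmeas.aestronglyMeasurable (Eventually.of_forall fun z ↦ ?_)
  rw [norm_of_nonneg (gagliardoKernel_nonneg p u z)]
  change _ ≤ F z + F z.swap
  by_cases hz₂ : z.2 ∈ tsupport u
  · linarith [hle_F hz₂, hF_nonneg z.swap]
  by_cases hz₁ : z.1 ∈ tsupport u
  · have hle := hle_F (z := z.swap) hz₁
    rw [gagliardoKernel_swap] at hle
    linarith [hF_nonneg z]
  · have hzero : gagliardoKernel p u z = 0 := by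
      simp [gagliardoKernel, image_eq_zero_of_notMem_tsupport hz₁,
        image_eq_zero_of_notMem_tsupport hz₂]
    linarith [hF_nonneg z, hF_nonneg z.swap]

lemma integral_gagliardoKernel_le (hp : finrank ℝ E < p) (hδ : 0 < δ)
    (hU : MeasurableSet U) (hsep : Metric.thickening δ (Function.support u) ⊆ U)
    (hk : Integrable (gagliardoKernel p u) (μ.prod μ)) (hu : Integrable (fun x ↦ u x ^ 2) μ) :
    ∫ z, gagliardoKernel p u z ∂μ.prod μ ≤
      (∫ z in U ×ˢ U, gagliardoKernel p u z ∂μ.prod μ) +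
        2 * ((∫ x, u x ^ 2 ∂μ) * ∫ z, tailKernel p δ z ∂μ) := by
  set F : E × E → ℝ := fun z ↦ u z.2 ^ 2 * tailKernel p δ (z.1 - z.2)
  have hF : Integrable F (μ.prod μ) := integrable_mul_comp_sub hu (integrable_tailKernel μ hp hδ)
  have hF_swap : Integrable (fun z ↦ F z.swap) (μ.prod μ) := hF.swap
  have hF_sum : Integrable (fun z ↦ F z + F z.swap) (μ.prod μ) := hF.add hF_swap
  have hin := hk.indicator (hU.prod hU)
  calc ∫ z, gagliardoKernel p u z ∂μ.prod μ
      ≤ ∫ z, ((U ×ˢ U).indicator (gagliardoKernel p u) z + (F z + F z.swap)) ∂μ.prod μ :=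
        integral_mono hk (hin.add hF_sum) (gagliardoKernel_le_indicator_add_tail hδ hsep)
    _ = (∫ z in U ×ˢ U, gagliardoKernel p u z ∂μ.prod μ) + 2 * ∫ z, F z ∂μ.prod μ := by
        rw [integral_add hin hF_sum, integral_add hF hF_swap, integral_prod_swap,
          integral_indicator (hU.prod hU), two_mul]
    _ = _ := by rw [integral_mul_comp_sub hu (integrable_tailKernel μ hp hδ)]

end GagliardoKernel

section Sobolev

variable {N : ℕ} {s : ℝ} {U : Set (Euc N)} {u : Euc N → ℝ}

lemma cNs_pos (N : ℕ) (hs : s ∈ Ioo (0 : ℝ) 1) : 0 < cNs N s := by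
  have hs₀ : 0 < s := hs.1
  have hΓ : 0 < Gamma (1 - s) := Gamma_pos_of_pos (sub_pos.2 hs.2)
  unfold cNs
  positivity

lemma critExp_pos (hs : 0 < s) (hN : 2 * s < N) : 0 < critExp N s :=
  div_pos (by linarith) (sub_pos.2 hN)

lemma gagliardo_nonneg (hs : s ∈ Ioo (0 : ℝ) 1) (U : Set (Euc N)) (u : Euc N → ℝ) :
    0 ≤ gagliardo N s U u :=
  mul_nonneg (half_pos (cNs_pos N hs)).le <|
    integral_nonneg fun x ↦ integral_nonneg fun y ↦ gagliardoKernel_nonneg _ u (x, y)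

lemma gagliardo_eq_setIntegral_prod
    (hk : Integrable (gagliardoKernel (N + 2 * s) u) (volume.prod volume)) (U : Set (Euc N)) :
    gagliardo N s U u =
      cNs N s / 2 * ∫ z in U ×ˢ U, gagliardoKernel (N + 2 * s) u z ∂volume.prod volume :=
  congrArg (cNs N s / 2 * ·) (setIntegral_prod _ hk.integrableOn).symm

lemma lpNormOn_eq_lpNormOn_univ {p : ℝ} (hp : p ≠ 0) (hU : Function.support u ⊆ U) :
    lpNormOn N p U u = lpNormOn N p univ u := by
  unfold lpNormOn
  rw [Measure.restrict_univ, setIntegral_eq_integral_of_forall_compl_eq_zero fun x hx ↦ by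
    rw [Function.notMem_support.1 fun h ↦ hx (hU h), abs_zero, zero_rpow hp]]

lemma sobolevConst_mul_sq_lpNormOn_le_gagliardo (hs : s ∈ Ioo (0 : ℝ) 1) (hp : critExp N s ≠ 0)
    (hu : testFun N U u) :
    sobolevConst N s U * lpNormOn N (critExp N s) U u ^ 2 ≤ gagliardo N s U u := by
  by_cases hnorm : lpNormOn N (critExp N s) U u = 0
  · simpa [hnorm] using gagliardo_nonneg hs U u
  have hu_ne : ¬ ∀ x, u x = 0 := fun h ↦ hnorm (by simp [lpNormOn, h, hp])
  rw [← le_div_iff₀ (by positivity)]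
  refine csInf_le ⟨0, ?_⟩ ⟨u, hu, hu_ne, rfl⟩
  rintro _ ⟨v, -, -, rfl⟩
  exact div_nonneg (gagliardo_nonneg hs U v) (sq_nonneg _)

/-- The constant `a_{N,s}`: the mass `c_{N,s} ∫_{‖z‖ ≥ 1} ‖z‖^{-N-2s} dz` of the tail of the
normalized Gagliardo kernel, with the integral evaluated in polar coordinates. -/
def tailConst (N : ℕ) (s : ℝ) : ℝ :=
  cNs N s * (N * volume.real (Metric.ball (0 : Euc N) 1) / (2 * s))

lemma tailConst_pos (hN : 0 < N) (hs : s ∈ Ioo (0 : ℝ) 1) : 0 < tailConst N s := by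
  have hs₀ : 0 < s := hs.1
  have hball : 0 < volume.real (Metric.ball (0 : Euc N) 1) :=
    ENNReal.toReal_pos (Metric.measure_ball_pos _ _ one_pos).ne' measure_ball_lt_top.ne
  have hc : 0 < cNs N s := cNs_pos N hs
  unfold tailConst
  positivity

lemma gagliardo_univ_le (hN : 0 < N) (hs : s ∈ Ioo (0 : ℝ) 1) (hU : MeasurableSet U) {δ : ℝ}
    (hδ : 0 < δ) (hu : testFun N univ u)
    (hsep : Metric.thickening δ (Function.support u) ⊆ U) :
    gagliardo N s univ u ≤
      gagliardo N s U u + tailConst N s * δ ^ (-(2 * s)) * ∫ x in U, u x ^ 2 := by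
  obtain ⟨hsmooth, hcompact, -⟩ := hu
  have : NeZero N := ⟨hN.ne'⟩
  have hdim : (Module.finrank ℝ (Euc N) : ℝ) = N := by simp
  have hs₀ : 0 < s := hs.1
  have hp : Module.finrank ℝ (Euc N) < N + 2 * s := by linarith
  obtain ⟨L, hL⟩ := hsmooth.lipschitzWith_of_hasCompactSupport hcompact (by simp)
  have hk : Integrable (gagliardoKernel (N + 2 * s) u) (volume.prod volume) :=
    integrable_gagliardoKernel hL hcompact hp (by linarith [hs.2])
  have hu_sq : Integrable (fun x ↦ u x ^ 2) :=
    (hsmooth.continuous.memLp_of_hasCompactSupport hcompact).integrable_sq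
  have hu_sq_U : ∫ x in U, u x ^ 2 = ∫ x, u x ^ 2 :=
    setIntegral_eq_integral_of_forall_compl_eq_zero fun x hx ↦ by
      rw [Function.notMem_support.1 fun h ↦ hx (hsep (Metric.self_subset_thickening hδ _ h)),
        zero_pow two_ne_zero]
  have hle := integral_gagliardoKernel_le hp hδ hU hsep hk hu_sq
  rw [integral_tailKernel volume hp hδ, hdim, add_sub_cancel_left, sub_add_cancel_left] at hle
  rw [gagliardo_eq_setIntegral_prod hk, gagliardo_eq_setIntegral_prod hk, univ_prod_univ,
    Measure.restrict_univ, hu_sq_U, tailConst]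
  linarith [mul_le_mul_of_nonneg_left hle (half_pos (cNs_pos N hs)).le]

end Sobolev

lemma thickening_support_subset_unitBall {N : ℕ} {u : Euc N → ℝ} {ρ : ℝ}
    (hρ : ρ ∈ Ioo (0 : ℝ) 1) (hu : tsupport u ⊆ Metric.closedBall 0 ρ) :
    Metric.thickening (1 - ρ) (Function.support u) ⊆ unitBall N := by
  refine (Metric.thickening_subset_of_subset _ ((subset_tsupport u).trans hu)).trans_eq ?_
  rw [thickening_closedBall (sub_pos.2 hρ.2) hρ.1.le, sub_add_cancel, unitBall]

theorem statement12_general (N : ℕ) (s : ℝ) (hs : s ∈ Ioo (0 : ℝ) 1) (hN : 2 * s < N)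
    (U : Set (Euc N)) (hU : MeasurableSet U) (δ : ℝ) (hδ : 0 < δ)
    (u : Euc N → ℝ) (hu : testFun N univ u)
    (hsep : Metric.thickening δ (Function.support u) ⊆ U) :
    gagliardo N s U u ≥
      sobolevConst N s univ * lpNormOn N (critExp N s) U u ^ 2 -
        tailConst N s * δ ^ (-(2 * s)) * ∫ x in U, u x ^ 2 := by
  have hN₀ : 0 < N := Nat.cast_pos.1 (lt_trans (mul_pos two_pos hs.1) hN)
  have hp : critExp N s ≠ 0 := (critExp_pos hs.1 hN).ne'
  rw [lpNormOn_eq_lpNormOn_univ hp ((Metric.self_subset_thickening hδ _).trans hsep)]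
  linarith [sobolevConst_mul_sq_lpNormOn_le_gagliardo hs hp hu,
    gagliardo_univ_le hN₀ hs hU hδ hu hsep]

/-- for radial test functions supported in the closed ball of radius ρ < 1,
Q_{N,s,B}(u) ≥ S_{N,s}(ℝ^N)‖u‖²_{2*_s} − K_ρ‖u‖²_{L²} with K_ρ = a_{N,s}(1−ρ)^{−2s}. -/
theorem statement12 (N : ℕ) (hN : 2 ≤ N) (s : ℝ) (hs : s ∈ Set.Ioo (1/2 : ℝ) 1) :
    ∃ a : ℝ, 0 < a ∧ ∀ ρ ∈ Set.Ioo (0 : ℝ) 1,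
      0 < a * (1 - ρ) ^ (-(2 * s)) ∧
      ∀ u : Euc N → ℝ, testFun N (unitBall N) u → IsRadial N u →
        tsupport u ⊆ Metric.closedBall (0 : Euc N) ρ →
        gagliardo N s (unitBall N) u ≥
          sobolevConst N s Set.univ * (lpNormOn N (critExp N s) (unitBall N) u) ^ 2 -
            (a * (1 - ρ) ^ (-(2 * s))) * ∫ x in unitBall N, (u x) ^ 2 := by
  have hs' : s ∈ Ioo (0 : ℝ) 1 := ⟨one_half_pos.trans hs.1, hs.2⟩
  have hN' : 2 * s < N := by linarith [hs.2, (Nat.ofNat_le_cast (α := ℝ)).2 hN]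
  have ha : 0 < tailConst N s := tailConst_pos (two_pos.trans_le hN) hs'
  refine ⟨tailConst N s, ha, fun ρ hρ ↦ ?_⟩
  have hδ : 0 < 1 - ρ := sub_pos.2 hρ.2
  exact ⟨by positivity, fun u hu _ hsupp ↦ statement12_general N s hs' hN' (unitBall N)
    measurableSet_ball (1 - ρ) hδ u ⟨hu.1, hu.2.1, subset_univ _⟩
    (thickening_support_subset_unitBall hρ hsupp)⟩
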